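/- (Uniqueness for the Dirichlet problem with symmetric BV weight.) Let a<b, c := (a+b)/2, let g satisfy (g₊) and (g_s), and let q ∈ BV([a,b]) be such that q ≥ 0 a.e., q ≢ 0, q(t) = q(a+b−t) for a.e. t ∈ [a,b], and q is non-decreasing on [a,c]. Then the Dirichlet problem u'' + q(t) g(u) = 0, u(a) = 0 = u(b), has at most one positive solution. -/

import Mathlib

open Set MeasureTheory Filter Topology

/-- Carathéodory solution of `u'' + F(t, u) = 0` on `[a,b]`. -/
def IsCaraSol (a b : ℝ) (F : ℝ → ℝ → ℝ) (u u' : ℝ → ℝ) : Prop :=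
  (∀ t ∈ Set.Icc a b, HasDerivAt u (u' t) t) ∧
  IntervalIntegrable (fun s => F s (u s)) MeasureTheory.volume a b ∧
  ∀ t ∈ Set.Icc a b, u' t = u' a - ∫ s in a..t, F s (u s)

/-!
Multiplying the equation by `u'` and integrating by parts against the nondecreasing weight `q` shows
that, of two solutions on an interval of `[a, c]` that agree at its endpoints and are ordered
inside, the larger one loses less energy `u'²`. If both have nonnegative slope at the endpoints,
this is incompatible with the order of the slopes where the two graphs meet again. So two solutions
starting from the same value and with nonnegative slopes wherever they meet never cross in `(a, c)`.

Applied to a solution and its reflection about `c`, whose squared slopes at `c` coincide, this shows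
that every solution with equal boundary values is symmetric, hence rises on `[a, c]`. Applied to two
positive solutions, it shows that they are ordered, and the identity `∫ q (v g(u) - u g(v)) = 0`
rules out `v < u`, since `g(s) / s` is strictly increasing.
-/

/-! ### One-variable calculus -/

section Calculus

variable {a b : ℝ}

theorem le_of_forall_sub_le_sub_mul_sub {D Q : ℝ → ℝ} (hab : a ≤ b)
    (h : ∀ r ∈ Icc a b, ∀ s ∈ Icc a b, r ≤ s → D r - D s ≤ (Q s - Q r) * (s - r)) :
    D a ≤ D b := by
  have sub_le_div (n : ℕ) : D a - D b ≤ (Q b - Q a) * (b - a) * (1 / ((n : ℝ) + 1)) := by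
    set δ := (b - a) * (1 / ((n : ℝ) + 1)) with hδ_def
    have hδ : 0 ≤ δ := mul_nonneg (sub_nonneg.2 hab) (by positivity)
    let p : ℕ → ℝ := fun i => a + i * δ
    have p_zero : p 0 = a := by simp [p]
    have p_last : p (n + 1) = b := by simp only [p, hδ_def]; push_cast; field_simp; ring
    have p_mono : Monotone p := fun i j hij =>
      add_le_add_right (mul_le_mul_of_nonneg_right (Nat.cast_le.2 hij) hδ) a
    have p_mem {i : ℕ} (hi : i ≤ n + 1) : p i ∈ Icc a b :=
      ⟨p_zero ▸ p_mono i.zero_le, p_last ▸ p_mono hi⟩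
    calc D a - D b = ∑ i ∈ Finset.range (n + 1), (D (p i) - D (p (i + 1))) := by
          rw [Finset.sum_range_sub', p_zero, p_last]
      _ ≤ ∑ i ∈ Finset.range (n + 1), (Q (p (i + 1)) - Q (p i)) * δ := by
          refine Finset.sum_le_sum fun i hi => ?_
          have hi : i + 1 ≤ n + 1 := Finset.mem_range.1 hi
          have step : p (i + 1) - p i = δ := by simp only [p]; push_cast; ring
          exact step ▸ h _ (p_mem (by omega)) _ (p_mem hi) (p_mono i.le_succ)
      _ = (Q b - Q a) * (b - a) * (1 / ((n : ℝ) + 1)) := by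
          rw [← Finset.sum_mul, Finset.sum_range_sub (fun i => Q (p i)), p_zero, p_last, hδ_def,
            mul_assoc]
  have lim := (tendsto_one_div_add_atTop_nhds_zero_nat (𝕜 := ℝ)).const_mul ((Q b - Q a) * (b - a))
  rw [mul_zero] at lim
  exact sub_nonpos.1 (ge_of_tendsto' lim sub_le_div)

-- With `Φ t = ∫ x in a..t, ψ x`, the difference of the two sides is `∫ Φ dq`, which is nonnegative.
-- The proof bounds its increments from below instead of introducing the Stieltjes measure `dq`.
theorem integral_mul_le_mul_integral_of_monotoneOn {q ψ : ℝ → ℝ} (hab : a ≤ b)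
    (hq : MonotoneOn q (Icc a b)) (hψ : ContinuousOn ψ (Icc a b))
    (hΦ : ∀ t ∈ Icc a b, 0 ≤ ∫ x in a..t, ψ x) :
    ∫ x in a..b, q x * ψ x ≤ q b * ∫ x in a..b, ψ x := by
  obtain ⟨C, hC⟩ := isCompact_Icc.exists_bound_of_continuousOn hψ
  have ha : a ∈ Icc a b := left_mem_Icc.2 hab
  have hψ_int {r s : ℝ} (hr : r ∈ Icc a b) (hs : s ∈ Icc a b) : IntervalIntegrable ψ volume r s :=
    (hψ.mono (uIcc_subset_Icc hr hs)).intervalIntegrable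
  have hqψ_int {r s : ℝ} (hr : r ∈ Icc a b) (hs : s ∈ Icc a b) :
      IntervalIntegrable (fun x => q x * ψ x) volume r s :=
    (hq.mono (uIcc_subset_Icc hr hs)).intervalIntegrable.mul_continuousOn
      (hψ.mono (uIcc_subset_Icc hr hs))
  have oscillation {r s : ℝ} (hr : r ∈ Icc a b) (hs : s ∈ Icc a b) (hrs : r ≤ s) :
      ∫ x in r..s, (q x - q r) * ψ x ≤ C * (q s - q r) * (s - r) := by
    refine (le_abs_self _).trans ?_
    rw [← Real.norm_eq_abs, ← abs_of_nonneg (sub_nonneg.2 hrs)]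
    refine intervalIntegral.norm_integral_le_of_norm_le_const fun x hx => ?_
    rw [uIoc_of_le hrs] at hx
    have hx' : x ∈ Icc a b := ⟨hr.1.trans hx.1.le, hx.2.trans hs.2⟩
    have hqr : 0 ≤ q x - q r := sub_nonneg.2 (hq hr hx' hx.1.le)
    have hqs : q x - q r ≤ q s - q r := sub_le_sub_right (hq hx' hs hx.2) _
    rw [norm_mul, Real.norm_of_nonneg hqr, mul_comm]
    exact mul_le_mul (hC x hx') hqs hqr ((norm_nonneg _).trans (hC x hx'))
  have increasing := le_of_forall_sub_le_sub_mul_sub hab (Q := fun t => C * q t)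
    (D := fun t => q t * (∫ x in a..t, ψ x) - ∫ x in a..t, q x * ψ x) fun r hr s hs hrs => by
      have split : ∫ x in r..s, (q x - q r) * ψ x =
          (∫ x in r..s, q x * ψ x) - q r * ∫ x in r..s, ψ x := by
        simp only [sub_mul]
        rw [intervalIntegral.integral_sub (hqψ_int hr hs) ((hψ_int hr hs).const_mul _),
          intervalIntegral.integral_const_mul]
      have hosc := oscillation hr hs hrs
      have hjump := mul_nonneg (sub_nonneg.2 (hq hr hs hrs)) (hΦ s hs)
      rw [split] at hosc
      simp only [← intervalIntegral.integral_add_adjacent_intervals (hψ_int ha hr) (hψ_int hr hs),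
        ← intervalIntegral.integral_add_adjacent_intervals (hqψ_int ha hr) (hqψ_int hr hs)]
        at hjump ⊢
      linarith
  simpa using increasing

theorem integral_mul_add_mul_of_eq_add_integral {f F h H : ℝ → ℝ} (hab : a ≤ b)
    (hf : IntervalIntegrable f volume a b) (hF : ∀ t ∈ Icc a b, F t = F a + ∫ x in a..t, f x)
    (hh : IntervalIntegrable h volume a b) (hH : ∀ t ∈ Icc a b, H t = H a + ∫ x in a..t, h x) :
    ∫ x in a..b, (f x * H x + F x * h x) = F b * H b - F a * H a := by
  have primitive_ac {f : ℝ → ℝ} (hf : IntervalIntegrable f volume a b) (y : ℝ) :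
      AbsolutelyContinuousOnInterval (fun t => y + ∫ x in a..t, f x) a b :=
    (LipschitzWith.const y).lipschitzOnWith.absolutelyContinuousOnInterval.add
      (hf.absolutelyContinuousOnInterval_intervalIntegral left_mem_uIcc)
  have parts := (primitive_ac hf (F a)).integral_deriv_mul_eq_sub (primitive_ac hh (H a))
  rw [← hF b (right_mem_Icc.2 hab), ← hH b (right_mem_Icc.2 hab), intervalIntegral.integral_same,
    intervalIntegral.integral_same, add_zero, add_zero] at parts
  rw [← parts]
  apply intervalIntegral.integral_congr_ae
  filter_upwards [hf.ae_hasDerivAt_integral, hh.ae_hasDerivAt_integral] with x hfx hhx hx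
  have hx_uIcc : x ∈ uIcc a b := uIoc_subset_uIcc hx
  have hx_Icc : x ∈ Icc a b := uIcc_of_le hab ▸ hx_uIcc
  rw [((hfx hx_uIcc a left_mem_uIcc).const_add _).deriv,
    ((hhx hx_uIcc a left_mem_uIcc).const_add _).deriv, ← hF x hx_Icc, ← hH x hx_Icc]

theorem deriv_nonneg_and_nonpos_of_antitoneOn_of_eq {f f' : ℝ → ℝ} (hab : a < b)
    (hf : ∀ t ∈ Icc a b, HasDerivAt f (f' t) t) (hf' : AntitoneOn f' (Icc a b))
    (heq : f a = f b) : 0 ≤ f' a ∧ f' b ≤ 0 := by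
  obtain ⟨x, hx, hx0⟩ := exists_hasDerivAt_eq_zero hab (HasDerivAt.continuousOn hf) heq
    fun t ht => hf t (Ioo_subset_Icc_self ht)
  have hx' : x ∈ Icc a b := Ioo_subset_Icc_self hx
  exact ⟨hx0 ▸ hf' (left_mem_Icc.2 hab.le) hx' hx.1.le,
    hx0 ▸ hf' hx' (right_mem_Icc.2 hab.le) hx.2.le⟩

theorem deriv_pos_of_antitoneOn_of_lt {f f' : ℝ → ℝ} (hab : a < b)
    (hf : ∀ t ∈ Icc a b, HasDerivAt f (f' t) t) (hf' : AntitoneOn f' (Icc a b))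
    (hlt : f a < f b) : 0 < f' a := by
  obtain ⟨x, hx, hslope⟩ := exists_hasDerivAt_eq_slope f f' hab (HasDerivAt.continuousOn hf)
    fun t ht => hf t (Ioo_subset_Icc_self ht)
  have hx0 : 0 < f' x := hslope ▸ div_pos (sub_pos.2 hlt) (sub_pos.2 hab)
  exact hx0.trans_le (hf' (left_mem_Icc.2 hab.le) (Ioo_subset_Icc_self hx) hx.1.le)

theorem exists_last_zero_of_continuousOn {w : ℝ → ℝ} (hw : ContinuousOn w (Icc a b))
    (hab : a ≤ b) (ha : w a ≤ 0) (hb : 0 < w b) :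
    ∃ r ∈ Ico a b, w r = 0 ∧ ∀ x ∈ Ioc r b, 0 < w x := by
  have compact : IsCompact (Icc a b ∩ w ⁻¹' Iic 0) :=
    isCompact_Icc.of_isClosed_subset (hw.preimage_isClosed_of_isClosed isClosed_Icc isClosed_Iic)
      inter_subset_left
  obtain ⟨r, ⟨hr, hwr⟩, hmax⟩ := compact.exists_isGreatest ⟨a, left_mem_Icc.2 hab, ha⟩
  obtain ⟨z, hz, hwz⟩ := intermediate_value_Icc hr.2 (hw.mono (Icc_subset_Icc_left hr.1))
    ⟨hwr, hb.le⟩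
  obtain rfl : z = r := le_antisymm (hmax ⟨⟨hr.1.trans hz.1, hz.2⟩, hwz.le⟩) hz.1
  refine ⟨z, ⟨hr.1, hr.2.lt_of_ne ?_⟩, hwz, fun x hx => ?_⟩
  · rintro rfl
    exact hb.ne' hwz
  · by_contra! hwx
    exact hx.1.not_ge (hmax ⟨⟨hr.1.trans hx.1.le, hx.2⟩, hwx⟩)

theorem exists_first_zero_of_continuousOn {w : ℝ → ℝ} (hw : ContinuousOn w (Icc a b))
    (hab : a ≤ b) (ha : 0 < w a) (hb : w b ≤ 0) :
    ∃ s ∈ Ioc a b, w s = 0 ∧ ∀ x ∈ Ico a s, 0 < w x := by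
  obtain ⟨r, hr, hwr, hpos⟩ := exists_last_zero_of_continuousOn (w := fun x => w (-x))
    (hw.comp continuousOn_neg fun x hx => ⟨le_neg.2 hx.2, neg_le.2 hx.1⟩)
    (neg_le_neg hab) (by simpa using hb) (by simpa using ha)
  refine ⟨-r, ⟨lt_neg.2 hr.2, neg_le.2 hr.1⟩, hwr, fun x hx => ?_⟩
  simpa using hpos (-x) ⟨lt_neg.2 hx.2, neg_le_neg hx.1⟩

theorem monotoneOn_of_monotoneOn_div {g : ℝ → ℝ} (hg : ContinuousOn g (Ici 0))
    (hg0 : ∀ s ≥ 0, 0 ≤ g s) (hdiv : MonotoneOn (fun s => g s / s) (Ioi 0)) :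
    MonotoneOn g (Ici 0) := by
  have monotoneOn_Ioi : MonotoneOn g (Ioi 0) := fun x (hx : 0 < x) y (hy : 0 < y) hxy => by
    have ratio := mul_le_mul (hdiv hx hy hxy) hxy hx.le (div_nonneg (hg0 y hy.le) hy.le)
    simpa [hx.ne', hy.ne'] using ratio
  rw [← Ioi_insert]
  exact monotoneOn_Ioi.insert_of_continuousWithinAt (mem_closure_iff_clusterPt.1 (by simp))
    ((hg 0 self_mem_Ici).mono Ioi_subset_Ici_self)

theorem strictMonoOn_div_of_div_lt_deriv {g : ℝ → ℝ} (hg : DifferentiableOn ℝ g (Ioi 0))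
    (hderiv : ∀ s > 0, g s / s < deriv g s) : StrictMonoOn (fun s => g s / s) (Ioi 0) := by
  have hasDerivAt_div {s : ℝ} (hs : 0 < s) :
      HasDerivAt (fun s => g s / s) ((deriv g s * s - g s * 1) / s ^ 2) s :=
    ((hg s hs).differentiableAt (Ioi_mem_nhds hs)).hasDerivAt.div (hasDerivAt_id s) hs.ne'
  refine strictMonoOn_of_deriv_pos (convex_Ioi 0)
    (fun s hs => (hasDerivAt_div hs).continuousAt.continuousWithinAt) fun s hs => ?_
  have hs : 0 < s := by simpa using hs
  have numerator_pos := (div_lt_iff₀ hs).1 (hderiv s hs)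
  rw [(hasDerivAt_div hs).deriv]
  exact div_pos (by linarith) (pow_pos hs 2)

end Calculus

/-! ### Carathéodory solutions -/

namespace IsCaraSol

variable {a b : ℝ} {F G : ℝ → ℝ → ℝ} {u u' v v' : ℝ → ℝ}

theorem hasDerivAt (h : IsCaraSol a b F u u') {t : ℝ} (ht : t ∈ Icc a b) :
    HasDerivAt u (u' t) t := h.1 t ht

theorem continuousOn (h : IsCaraSol a b F u u') : ContinuousOn u (Icc a b) :=
  HasDerivAt.continuousOn h.1

theorem intervalIntegrable (h : IsCaraSol a b F u u') {r s : ℝ} (hr : r ∈ Icc a b)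
    (hs : s ∈ Icc a b) : IntervalIntegrable (fun t => F t (u t)) volume r s :=
  h.2.1.mono_set (uIcc_of_le (hr.1.trans hr.2) ▸ uIcc_subset_Icc hr hs)

theorem deriv_eq_sub_integral (h : IsCaraSol a b F u u') {r s : ℝ} (hr : r ∈ Icc a b)
    (hs : s ∈ Icc a b) : u' s = u' r - ∫ x in r..s, F x (u x) := by
  have ha : a ∈ Icc a b := left_mem_Icc.2 (hr.1.trans hr.2)
  rw [h.2.2 s hs, h.2.2 r hr, ← intervalIntegral.integral_add_adjacent_intervals
    (h.intervalIntegrable ha hr) (h.intervalIntegrable hr hs)]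
  ring

theorem mono (h : IsCaraSol a b F u u') {r s : ℝ} (hr : r ∈ Icc a b) (hs : s ∈ Icc a b) :
    IsCaraSol r s F u u' :=
  have hsub : Icc r s ⊆ Icc a b := Icc_subset_Icc hr.1 hs.2
  ⟨fun _ ht => h.hasDerivAt (hsub ht), h.intervalIntegrable hr hs,
    fun _ ht => h.deriv_eq_sub_integral hr (hsub ht)⟩

theorem continuousOn_deriv (h : IsCaraSol a b F u u') : ContinuousOn u' (Icc a b) := by
  rcases le_or_gt a b with hab | hba
  · have hprim := (h.2.1.absolutelyContinuousOnInterval_intervalIntegral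
      (c := a) left_mem_uIcc).continuousOn
    rw [uIcc_of_le hab] at hprim
    exact (continuousOn_const.sub hprim).congr h.2.2
  · simp [Icc_eq_empty_of_lt hba]

theorem eq_add_integral (h : IsCaraSol a b F u u') {t : ℝ} (ht : t ∈ Icc a b) :
    u t = u a + ∫ x in a..t, u' x := by
  have hsub : uIcc a t ⊆ Icc a b := uIcc_subset_Icc (left_mem_Icc.2 (ht.1.trans ht.2)) ht
  rw [intervalIntegral.integral_eq_sub_of_hasDerivAt (fun x hx => h.hasDerivAt (hsub hx))
    (h.continuousOn_deriv.mono hsub).intervalIntegrable, add_sub_cancel]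

theorem sub (hu : IsCaraSol a b F u u') (hv : IsCaraSol a b G v v') :
    IsCaraSol a b (fun t _ => F t (u t) - G t (v t)) (fun t => u t - v t)
      (fun t => u' t - v' t) := by
  refine ⟨fun t ht => (hu.hasDerivAt ht).sub (hv.hasDerivAt ht), hu.2.1.sub hv.2.1,
    fun t ht => ?_⟩
  have ha : a ∈ Icc a b := left_mem_Icc.2 (ht.1.trans ht.2)
  dsimp only
  rw [intervalIntegral.integral_sub (hu.intervalIntegrable ha ht) (hv.intervalIntegrable ha ht),
    hu.2.2 t ht, hv.2.2 t ht]
  ring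

theorem congr_ae (h : IsCaraSol a b F u u') (hab : a ≤ b)
    (hFG : ∀ᵐ t ∂volume.restrict (Icc a b), F t (u t) = G t (u t)) : IsCaraSol a b G u u' := by
  refine ⟨h.1, h.2.1.congr_ae (ae_restrict_of_ae_restrict_of_subset ?_ hFG), fun t ht => ?_⟩
  · exact uIoc_of_le hab ▸ Ioc_subset_Icc_self
  rw [h.2.2 t ht, intervalIntegral.integral_congr_ae_restrict]
  exact ae_restrict_of_ae_restrict_of_subset
    (uIoc_of_le ht.1 ▸ Ioc_subset_Icc_self.trans (Icc_subset_Icc_right ht.2)) hFG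

theorem antitoneOn_deriv (h : IsCaraSol a b F u u')
    (hF : ∀ᵐ t ∂volume.restrict (Icc a b), 0 ≤ F t (u t)) : AntitoneOn u' (Icc a b) := by
  intro r hr s hs hrs
  rw [h.deriv_eq_sub_integral hr hs, sub_le_self_iff]
  exact intervalIntegral.integral_nonneg_of_ae_restrict hrs
    (ae_restrict_of_ae_restrict_of_subset (Icc_subset_Icc hr.1 hs.2) hF)

theorem comp_sub_left (h : IsCaraSol a b F u u') :
    IsCaraSol a b (fun t x => F (a + b - t) x) (fun t => u (a + b - t))
      (fun t => -u' (a + b - t)) := by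
  have hmem {t : ℝ} (ht : t ∈ Icc a b) : a + b - t ∈ Icc a b :=
    ⟨by linarith [ht.2], by linarith [ht.1]⟩
  refine ⟨fun t ht => ?_, ?_, fun t ht => ?_⟩
  · simpa using (h.hasDerivAt (hmem ht)).comp_const_sub (a + b) t
  · simpa using (h.2.1.comp_sub_left (a + b)).symm
  · dsimp only
    rw [intervalIntegral.integral_comp_sub_left (fun x => F x (u x)),
      h.deriv_eq_sub_integral (hmem ht) (hmem (left_mem_Icc.2 (ht.1.trans ht.2)))]
    ring

theorem integral_mul_sub_deriv_mul (h : IsCaraSol a b F u u') (hab : a ≤ b) {φ ψ : ℝ → ℝ}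
    (hψ : IntervalIntegrable ψ volume a b) (hφ : ∀ t ∈ Icc a b, φ t = φ a + ∫ x in a..t, ψ x) :
    ∫ x in a..b, (φ x * F x (u x) - ψ x * u' x) = φ a * u' a - φ b * u' b := by
  have parts := integral_mul_add_mul_of_eq_add_integral hab hψ hφ h.2.1.neg (H := u')
    fun t ht => by simp [h.2.2 t ht, sub_eq_add_neg]
  rw [← neg_sub (φ b * u' b), ← parts, ← intervalIntegral.integral_neg]
  exact intervalIntegral.integral_congr fun x _ => by simp only [Pi.neg_apply]; ring

theorem two_mul_integral_mul_deriv (h : IsCaraSol a b F u u') (hab : a ≤ b) :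
    2 * ∫ x in a..b, F x (u x) * u' x = u' a ^ 2 - u' b ^ 2 := by
  rw [sq, sq, ← h.integral_mul_sub_deriv_mul hab h.2.1.neg (φ := u')
    fun t ht => by simp [h.2.2 t ht, sub_eq_add_neg], ← intervalIntegral.integral_const_mul]
  exact intervalIntegral.integral_congr fun x _ => by simp only [Pi.neg_apply]; ring

theorem integral_wronskian (hu : IsCaraSol a b F u u') (hv : IsCaraSol a b G v v') (hab : a ≤ b) :
    ∫ x in a..b, (v x * F x (u x) - u x * G x (v x)) =
      (v a * u' a - u a * v' a) - (v b * u' b - u b * v' b) := by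
  have integrable_deriv {F : ℝ → ℝ → ℝ} {w w' : ℝ → ℝ} (h : IsCaraSol a b F w w') :
      IntervalIntegrable w' volume a b := h.continuousOn_deriv.intervalIntegrable_of_Icc hab
  have integrable_mul {F : ℝ → ℝ → ℝ} {w w' φ ψ : ℝ → ℝ} (h : IsCaraSol a b F w w')
      (hφ : ContinuousOn φ (Icc a b)) (hψ : ContinuousOn ψ (Icc a b)) :
      IntervalIntegrable (fun x => φ x * F x (w x) - ψ x * w' x) volume a b :=
    (h.2.1.continuousOn_mul (uIcc_of_le hab ▸ hφ)).sub
      ((integrable_deriv h).continuousOn_mul (uIcc_of_le hab ▸ hψ))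
  have hu_weak := hu.integral_mul_sub_deriv_mul hab (integrable_deriv hv)
    fun t ht => hv.eq_add_integral ht
  have hv_weak := hv.integral_mul_sub_deriv_mul hab (integrable_deriv hu)
    fun t ht => hu.eq_add_integral ht
  have difference := intervalIntegral.integral_sub
    (integrable_mul hu hv.continuousOn hv.continuousOn_deriv)
    (integrable_mul hv hu.continuousOn hu.continuousOn_deriv)
  rw [hu_weak, hv_weak] at difference
  calc _ = _ := intervalIntegral.integral_congr fun x _ => by ring
    _ = _ := difference
    _ = _ := by ring

end IsCaraSol

/-! ### Comparison of two solutions -/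

/-- The nonlinearity `(t, x) ↦ q t * g x` is nonnegative and nondecreasing in each variable for `t`
in `[a, b]`, and continuous in `x`. This is what the comparison of two solutions on `[a, b]` needs;
the sign of `q` is only prescribed almost everywhere. -/
structure IsMonotoneField (a b : ℝ) (q g : ℝ → ℝ) : Prop where
  continuous : Continuous g
  monotone : Monotone g
  nonneg : ∀ x, 0 ≤ g x
  weight_nonneg : ∀ᵐ t ∂volume.restrict (Icc a b), 0 ≤ q t
  weight_monotoneOn : MonotoneOn q (Icc a b)

/-- Two solutions of `u'' + F(t, u) = 0` on `[a, c]` that agree at `a` and both have nonnegative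
slope at every point of `[a, c)` where they meet. For monotone fields such a pair cannot cross
inside `(a, c)`. -/
structure IsRisingPair (a c : ℝ) (F : ℝ → ℝ → ℝ) (u u' v v' : ℝ → ℝ) : Prop where
  left : IsCaraSol a c F u u'
  right : IsCaraSol a c F v v'
  eq_left : u a = v a
  deriv_nonneg : ∀ s ∈ Ico a c, u s = v s → 0 ≤ u' s ∧ 0 ≤ v' s

section Comparison

variable {a b c : ℝ} {q g u u' v v' : ℝ → ℝ}

theorem IsMonotoneField.mono (hF : IsMonotoneField a b q g) {r s : ℝ} (hr : r ∈ Icc a b)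
    (hs : s ∈ Icc a b) : IsMonotoneField r s q g where
  __ := hF
  weight_nonneg :=
    ae_restrict_of_ae_restrict_of_subset (Icc_subset_Icc hr.1 hs.2) hF.weight_nonneg
  weight_monotoneOn := hF.weight_monotoneOn.mono (Icc_subset_Icc hr.1 hs.2)

theorem IsRisingPair.symm {F : ℝ → ℝ → ℝ} (h : IsRisingPair a c F u u' v v') :
    IsRisingPair a c F v v' u u' where
  left := h.right
  right := h.left
  eq_left := h.eq_left.symm
  deriv_nonneg s hs heq := (h.deriv_nonneg s hs heq.symm).symm

-- Integrating `(G ∘ u - G ∘ v) dq ≥ 0` by parts, where `G' = g`, compares the energy losses.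
theorem deriv_sq_sub_deriv_sq_le (hg : Continuous g) (hg0 : ∀ x, 0 ≤ g x)
    (hq : MonotoneOn q (Icc a b)) (hab : a ≤ b)
    (hu : IsCaraSol a b (fun t x => q t * g x) u u')
    (hv : IsCaraSol a b (fun t x => q t * g x) v v')
    (ha : u a = v a) (hb : u b = v b) (hle : ∀ t ∈ Icc a b, v t ≤ u t) :
    u' a ^ 2 - v' a ^ 2 ≤ u' b ^ 2 - v' b ^ 2 := by
  set ψ : ℝ → ℝ := fun x => g (u x) * u' x - g (v x) * v' x
  have hu_cont : ContinuousOn (fun x => g (u x) * u' x) (Icc a b) :=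
    (hg.comp_continuousOn hu.continuousOn).mul hu.continuousOn_deriv
  have hv_cont : ContinuousOn (fun x => g (v x) * v' x) (Icc a b) :=
    (hg.comp_continuousOn hv.continuousOn).mul hv.continuousOn_deriv
  have hψ : ContinuousOn ψ (Icc a b) := hu_cont.sub hv_cont
  have primitive {t : ℝ} (ht : t ∈ Icc a b) : ∫ x in a..t, ψ x = ∫ y in v t..u t, g y := by
    have hsub : uIcc a t ⊆ Icc a b := uIcc_subset_Icc (left_mem_Icc.2 hab) ht
    have hG (x : ℝ) : HasDerivAt (fun y => ∫ z in (0 : ℝ)..y, g z) (g x) x :=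
      (hg.integral_hasStrictDerivAt 0 x).hasDerivAt
    rw [intervalIntegral.integral_eq_sub_of_hasDerivAt
      (fun x hx => ((hG (u x)).comp x (hu.hasDerivAt (hsub hx))).sub
        ((hG (v x)).comp x (hv.hasDerivAt (hsub hx)))) (hψ.mono hsub).intervalIntegrable]
    simp [ha, intervalIntegral.integral_interval_sub_left (hg.intervalIntegrable 0 (u t))
      (hg.intervalIntegrable 0 (v t))]
  have hqψ : ∫ x in a..b, q x * ψ x ≤ 0 := by
    have bound := integral_mul_le_mul_integral_of_monotoneOn hab hq hψ fun t ht =>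
      (primitive ht).symm ▸ intervalIntegral.integral_nonneg (hle t ht) fun x _ => hg0 x
    simpa [primitive (right_mem_Icc.2 hab), hb] using bound
  have energy_loss : 2 * ∫ x in a..b, q x * ψ x =
      (u' a ^ 2 - u' b ^ 2) - (v' a ^ 2 - v' b ^ 2) := by
    rw [← hu.two_mul_integral_mul_deriv hab, ← hv.two_mul_integral_mul_deriv hab, ← mul_sub,
      ← intervalIntegral.integral_sub]
    · simp only [ψ, mul_sub, mul_assoc]
    · exact hu.2.1.mul_continuousOn (uIcc_of_le hab ▸ hu.continuousOn_deriv)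
    · exact hv.2.1.mul_continuousOn (uIcc_of_le hab ▸ hv.continuousOn_deriv)
  linarith

theorem IsMonotoneField.antitoneOn_deriv_sub (hF : IsMonotoneField a b q g)
    (hu : IsCaraSol a b (fun t x => q t * g x) u u')
    (hv : IsCaraSol a b (fun t x => q t * g x) v v') (hle : ∀ t ∈ Icc a b, v t ≤ u t) :
    AntitoneOn (fun t => u' t - v' t) (Icc a b) := by
  refine (hu.sub hv).antitoneOn_deriv ?_
  filter_upwards [hF.weight_nonneg, ae_restrict_mem measurableSet_Icc] with t hqt ht
  exact sub_nonneg.2 (mul_le_mul_of_nonneg_left (hF.monotone (hle t ht)) hqt)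

theorem IsMonotoneField.deriv_sq_lt_and_deriv_le (hF : IsMonotoneField a b q g) (hab : a < b)
    (hu : IsCaraSol a b (fun t x => q t * g x) u u')
    (hv : IsCaraSol a b (fun t x => q t * g x) v v')
    (ha : u a = v a) (hb : u b = v b) (hlt : ∀ t ∈ Ioo a b, v t < u t) (hva : 0 ≤ v' a) :
    v' b ^ 2 < u' b ^ 2 ∧ u' b ≤ v' b := by
  have hle : ∀ t ∈ Icc a b, v t ≤ u t := fun t ht => by
    rcases eq_endpoints_or_mem_Ioo_of_mem_Icc ht with rfl | rfl | ht'
    exacts [ha.ge, hb.ge, (hlt t ht').le]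
  have hw := hu.sub hv
  have hw' := hF.antitoneOn_deriv_sub hu hv hle
  obtain ⟨m, hm⟩ := nonempty_Ioo.2 hab
  have hsub : Icc a m ⊆ Icc a b := Icc_subset_Icc_right hm.2.le
  have deriv_a : 0 < u' a - v' a :=
    deriv_pos_of_antitoneOn_of_lt (f' := fun t => u' t - v' t) hm.1
      (fun t ht => hw.hasDerivAt (hsub ht)) (hw'.mono hsub) (by simpa [ha] using hlt m hm)
  have deriv_b : u' b - v' b ≤ 0 :=
    (deriv_nonneg_and_nonpos_of_antitoneOn_of_eq hab hw.1 hw' (by simp [ha, hb])).2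
  have energy := deriv_sq_sub_deriv_sq_le hF.continuous hF.nonneg hF.weight_monotoneOn hab.le hu hv
    ha hb hle
  have square_a : v' a ^ 2 < u' a ^ 2 := pow_lt_pow_left₀ (sub_pos.1 deriv_a) hva two_ne_zero
  exact ⟨by linarith, sub_nonpos.1 deriv_b⟩

namespace IsRisingPair

theorem lt_of_lt_left (h : IsRisingPair a c (fun t x => q t * g x) u u' v v')
    (hF : IsMonotoneField a c q g) {t x : ℝ} (ht : a ≤ t) (htx : t ≤ x) (hx : x < c)
    (hlt : v t < u t) : v x < u x := by
  by_contra! hxle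
  have hw : ContinuousOn (fun y => u y - v y) (Icc a c) :=
    h.left.continuousOn.sub h.right.continuousOn
  obtain ⟨r, hr, hwr, hpos_left⟩ := exists_last_zero_of_continuousOn
    (hw.mono (Icc_subset_Icc_right (htx.trans hx.le))) ht (sub_nonpos.2 h.eq_left.le)
    (sub_pos.2 hlt)
  obtain ⟨s, hs, hws, hpos_right⟩ := exists_first_zero_of_continuousOn
    (hw.mono (Icc_subset_Icc ht hx.le)) htx (sub_pos.2 hlt) (sub_nonpos.2 hxle)
  have hrs : r < s := hr.2.trans hs.1
  have hsc : s < c := hs.2.trans_lt hx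
  have hr_mem : r ∈ Icc a c := ⟨hr.1, (hrs.trans hsc).le⟩
  have hs_mem : s ∈ Icc a c := ⟨hr.1.trans hrs.le, hsc.le⟩
  have hur := sub_eq_zero.1 hwr
  have hus := sub_eq_zero.1 hws
  have hlt_between (y : ℝ) (hy : y ∈ Ioo r s) : v y < u y := sub_pos.1 <|
    (le_total y t).elim (fun hyt => hpos_left y ⟨hy.1, hyt⟩) fun hty => hpos_right y ⟨hty, hy.2⟩
  obtain ⟨sq_lt, deriv_le⟩ := (hF.mono hr_mem hs_mem).deriv_sq_lt_and_deriv_le hrs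
    (h.left.mono hr_mem hs_mem) (h.right.mono hr_mem hs_mem) hur hus hlt_between
    (h.deriv_nonneg r ⟨hr.1, hrs.trans hsc⟩ hur).2
  exact sq_lt.not_ge (pow_le_pow_left₀ (h.deriv_nonneg s ⟨hs_mem.1, hsc⟩ hus).1 deriv_le 2)

-- Touching at an interior point would be a tangency there, which concavity of `u - v` excludes.
theorem lt_of_lt_right (h : IsRisingPair a c (fun t x => q t * g x) u u' v v')
    (hF : IsMonotoneField a c q g) {t x : ℝ} (hx : a < x) (hxt : x ≤ t) (ht : t < c)
    (hlt : v t < u t) : v x < u x := by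
  by_contra! hxle
  have hle (y : ℝ) (hy : y ∈ Ioc a t) : v y ≤ u y := by
    by_contra! hylt
    exact hlt.asymm (h.symm.lt_of_lt_left hF hy.1.le hy.2 ht hylt)
  have hw := h.left.sub h.right
  obtain ⟨r, hr, hwr, -⟩ := exists_last_zero_of_continuousOn
    (hw.continuousOn.mono (Icc_subset_Icc hx.le ht.le)) hxt (sub_nonpos.2 hxle) (sub_pos.2 hlt)
  have har : a < r := hx.trans_le hr.1
  have hr_mem : r ∈ Icc a c := ⟨har.le, (hr.2.trans ht).le⟩
  have ht_mem : t ∈ Icc a c := ⟨(har.trans hr.2).le, ht.le⟩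
  have local_min : IsLocalMin (fun y => u y - v y) r := by
    filter_upwards [Ioo_mem_nhds har hr.2] with y hy
    exact hwr.trans_le (sub_nonneg.2 (hle y (Ioo_subset_Ioc_self hy)))
  have tangent : u' r - v' r = 0 := local_min.hasDerivAt_eq_zero (hw.hasDerivAt hr_mem)
  have transversal : 0 < u' r - v' r :=
    deriv_pos_of_antitoneOn_of_lt (f' := fun t => u' t - v' t) hr.2 (hw.mono hr_mem ht_mem).1
      ((hF.mono hr_mem ht_mem).antitoneOn_deriv_sub (h.left.mono hr_mem ht_mem)
        (h.right.mono hr_mem ht_mem) fun y hy => hle y ⟨har.trans_le hy.1, hy.2⟩)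
      (hwr.trans_lt (sub_pos.2 hlt))
  exact transversal.ne' tangent

theorem forall_lt_of_lt (h : IsRisingPair a c (fun t x => q t * g x) u u' v v')
    (hF : IsMonotoneField a c q g) {t : ℝ} (ht : t ∈ Ioo a c) (hlt : v t < u t) :
    ∀ x ∈ Ioo a c, v x < u x := fun x hx =>
  (le_total t x).elim (fun htx => h.lt_of_lt_left hF ht.1.le htx hx.2 hlt)
    fun hxt => h.lt_of_lt_right hF hx.1 hxt ht.2 hlt

end IsRisingPair

end Comparison

/-! ### Symmetry and uniqueness -/

/-- A weight on `[a, b]` that is nonnegative, symmetric about the midpoint (both almost everywhere),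
and nondecreasing on the left half. -/
structure IsSymmetricWeight (a b : ℝ) (q : ℝ → ℝ) : Prop where
  nonneg : ∀ᵐ t ∂volume.restrict (Icc a b), 0 ≤ q t
  symm : ∀ᵐ t ∂volume.restrict (Icc a b), q t = q (a + b - t)
  monotoneOn : MonotoneOn q (Icc a ((a + b) / 2))

/-- Solution of the Dirichlet problem `u'' + F(t, u) = 0`, `u(a) = 0 = u(b)` that is positive on
`(a, b)`. -/
structure IsPositiveDirichletSol (a b : ℝ) (F : ℝ → ℝ → ℝ) (u u' : ℝ → ℝ) : Prop where
  isCaraSol : IsCaraSol a b F u u'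
  eq_zero_left : u a = 0
  eq_zero_right : u b = 0
  pos : ∀ t ∈ Ioo a b, 0 < u t

section Uniqueness

variable {a b : ℝ} {q g u u' v v' : ℝ → ℝ}

namespace IsSymmetricWeight

theorem isMonotoneField (hq : IsSymmetricWeight a b q) (hab : a ≤ b) (hg : Continuous g)
    (hg_mono : Monotone g) (hg0 : ∀ x, 0 ≤ g x) : IsMonotoneField a ((a + b) / 2) q g where
  continuous := hg
  monotone := hg_mono
  nonneg := hg0
  weight_nonneg :=
    ae_restrict_of_ae_restrict_of_subset (Icc_subset_Icc_right (by linarith)) hq.nonneg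
  weight_monotoneOn := hq.monotoneOn

theorem isCaraSol_comp_sub_left (hq : IsSymmetricWeight a b q) (hab : a ≤ b)
    (hu : IsCaraSol a b (fun t x => q t * g x) u u') :
    IsCaraSol a b (fun t x => q t * g x) (fun t => u (a + b - t)) (fun t => -u' (a + b - t)) := by
  refine hu.comp_sub_left.congr_ae hab ?_
  filter_upwards [hq.symm] with t ht
  rw [← ht]

theorem deriv_nonneg_and_nonpos_of_eq_comp_sub_left (hq : IsSymmetricWeight a b q)
    (hg0 : ∀ x, 0 ≤ g x) (hu : IsCaraSol a b (fun t x => q t * g x) u u') {s : ℝ}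
    (hs : s ∈ Ico a ((a + b) / 2)) (heq : u s = u (a + b - s)) :
    0 ≤ u' s ∧ u' (a + b - s) ≤ 0 := by
  have hs_mem : s ∈ Icc a b := ⟨hs.1, by linarith [hs.1, hs.2]⟩
  have hs_refl : a + b - s ∈ Icc a b := ⟨by linarith [hs_mem.2], by linarith [hs.1]⟩
  have hsub : Icc s (a + b - s) ⊆ Icc a b := Icc_subset_Icc hs_mem.1 hs_refl.2
  have concave : AntitoneOn u' (Icc a b) :=
    hu.antitoneOn_deriv (hq.nonneg.mono fun t ht => mul_nonneg ht (hg0 _))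
  exact deriv_nonneg_and_nonpos_of_antitoneOn_of_eq (by linarith [hs.2])
    (fun t ht => hu.hasDerivAt (hsub ht)) (concave.mono hsub) heq

theorem comp_sub_left_le (hq : IsSymmetricWeight a b q) (hg : Continuous g)
    (hg_mono : Monotone g) (hg0 : ∀ x, 0 ≤ g x)
    (hu : IsCaraSol a b (fun t x => q t * g x) u u') (heq : u a = u b) {t : ℝ}
    (ht : t ∈ Ioo a ((a + b) / 2)) : u (a + b - t) ≤ u t := by
  have hac : a < (a + b) / 2 := ht.1.trans ht.2
  have hab : a < b := by linarith
  have ha : a ∈ Icc a b := left_mem_Icc.2 hab.le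
  have hc : (a + b) / 2 ∈ Icc a b := ⟨hac.le, by linarith⟩
  have reflect_midpoint : a + b - (a + b) / 2 = (a + b) / 2 := by ring
  have hF := hq.isMonotoneField hab.le hg hg_mono hg0
  have pair : IsRisingPair a ((a + b) / 2) (fun t x => q t * g x) (fun t => u (a + b - t))
      (fun t => -u' (a + b - t)) u u' :=
    { left := (hq.isCaraSol_comp_sub_left hab.le hu).mono ha hc
      right := hu.mono ha hc
      eq_left := by simpa using heq.symm
      deriv_nonneg := fun s hs hus =>
        have signs := hq.deriv_nonneg_and_nonpos_of_eq_comp_sub_left hg0 hu hs hus.symm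
        ⟨neg_nonneg.2 signs.2, signs.1⟩ }
  by_contra! hlt
  have sq_lt := (hF.deriv_sq_lt_and_deriv_le hac pair.left pair.right pair.eq_left
    (by rw [reflect_midpoint]) (pair.forall_lt_of_lt hF ht hlt)
    (pair.deriv_nonneg a ⟨le_rfl, hac⟩ pair.eq_left).2).1
  rw [reflect_midpoint, neg_sq] at sq_lt
  exact sq_lt.false

theorem comp_sub_left_eq (hq : IsSymmetricWeight a b q) (hg : Continuous g)
    (hg_mono : Monotone g) (hg0 : ∀ x, 0 ≤ g x)
    (hu : IsCaraSol a b (fun t x => q t * g x) u u') (heq : u a = u b) {t : ℝ}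
    (ht : t ∈ Icc a b) : u (a + b - t) = u t := by
  have hab : a ≤ b := ht.1.trans ht.2
  have left_half {t : ℝ} (ht : t ∈ Icc a ((a + b) / 2)) : u (a + b - t) = u t := by
    rcases eq_endpoints_or_mem_Ioo_of_mem_Icc ht with rfl | rfl | ht
    · simpa using heq.symm
    · congr 1; ring
    · refine le_antisymm (hq.comp_sub_left_le hg hg_mono hg0 hu heq ht) ?_
      simpa using hq.comp_sub_left_le hg hg_mono hg0
        (hq.isCaraSol_comp_sub_left hab hu) (by simpa using heq.symm) ht
  rcases le_total t ((a + b) / 2) with htc | htc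
  · exact left_half ⟨ht.1, htc⟩
  · simpa using (left_half (t := a + b - t) ⟨by linarith [ht.2], by linarith⟩).symm

theorem isRisingPair (hq : IsSymmetricWeight a b q) (hab : a ≤ b) (hg : Continuous g)
    (hg_mono : Monotone g) (hg0 : ∀ x, 0 ≤ g x)
    (hu : IsCaraSol a b (fun t x => q t * g x) u u') (hu_eq : u a = u b)
    (hv : IsCaraSol a b (fun t x => q t * g x) v v') (hv_eq : v a = v b) (heq : u a = v a) :
    IsRisingPair a ((a + b) / 2) (fun t x => q t * g x) u u' v v' := by
  have ha : a ∈ Icc a b := left_mem_Icc.2 hab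
  have hc : (a + b) / 2 ∈ Icc a b := ⟨by linarith, by linarith⟩
  have deriv_nonneg {w w' : ℝ → ℝ} (hw : IsCaraSol a b (fun t x => q t * g x) w w')
      (hw_eq : w a = w b) (s : ℝ) (hs : s ∈ Ico a ((a + b) / 2)) : 0 ≤ w' s :=
    (hq.deriv_nonneg_and_nonpos_of_eq_comp_sub_left hg0 hw hs (hq.comp_sub_left_eq hg hg_mono
      hg0 hw hw_eq ⟨hs.1, hs.2.le.trans hc.2⟩).symm).1
  exact ⟨hu.mono ha hc, hv.mono ha hc, heq,
    fun s hs _ => ⟨deriv_nonneg hu hu_eq s hs, deriv_nonneg hv hv_eq s hs⟩⟩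

end IsSymmetricWeight

theorem IsPositiveDirichletSol.weight_ae_eq_zero_of_ae_lt
    (hu : IsPositiveDirichletSol a b (fun t x => q t * g x) u u')
    (hv : IsPositiveDirichletSol a b (fun t x => q t * g x) v v') (hab : a ≤ b)
    (hg : StrictMonoOn (fun s => g s / s) (Ioi 0))
    (hq : ∀ᵐ t ∂volume.restrict (Icc a b), 0 ≤ q t)
    (hlt : ∀ᵐ t ∂volume.restrict (Ioo a b), v t < u t) :
    ∀ᵐ t ∂volume.restrict (Icc a b), q t = 0 := by
  set W : ℝ → ℝ := fun x => v x * (q x * g (u x)) - u x * (q x * g (v x)) with hW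
  rw [← restrict_Ioo_eq_restrict_Icc] at hq ⊢
  have factor_pos : ∀ᵐ x ∂volume.restrict (Ioo a b), 0 < v x * g (u x) - u x * g (v x) := by
    filter_upwards [hlt, ae_restrict_mem measurableSet_Ioo] with x hvu hx
    have hvx := hv.pos x hx
    have hux := hu.pos x hx
    have ratio := hg hvx hux hvu
    rw [div_lt_div_iff₀ hvx hux] at ratio
    linarith
  have W_eq (x : ℝ) : W x = q x * (v x * g (u x) - u x * g (v x)) := by ring
  have W_nonneg : 0 ≤ᵐ[volume.restrict (Ioo a b)] W := by
    filter_upwards [hq, factor_pos] with x hqx hx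
    exact W_eq x ▸ mul_nonneg hqx hx.le
  have W_int : IntervalIntegrable W volume a b :=
    (hu.isCaraSol.2.1.continuousOn_mul (uIcc_of_le hab ▸ hv.isCaraSol.continuousOn)).sub
      (hv.isCaraSol.2.1.continuousOn_mul (uIcc_of_le hab ▸ hu.isCaraSol.continuousOn))
  have W_integral : ∫ x in a..b, W x = 0 := by
    rw [hW, hu.isCaraSol.integral_wronskian hv.isCaraSol hab]
    simp [hu.eq_zero_left, hu.eq_zero_right, hv.eq_zero_left, hv.eq_zero_right]
  rw [restrict_Ioo_eq_restrict_Ioc] at *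
  filter_upwards [factor_pos,
    (intervalIntegral.integral_eq_zero_iff_of_le_of_nonneg_ae hab W_nonneg W_int).1 W_integral]
    with x hx hWx
  exact (mul_eq_zero.1 ((W_eq x).symm.trans hWx)).resolve_right hx.ne'

theorem IsSymmetricWeight.le_of_isPositiveDirichletSol (hq : IsSymmetricWeight a b q)
    (hq0 : ¬ ∀ᵐ t ∂volume.restrict (Icc a b), q t = 0) (hg : Continuous g)
    (hg_mono : Monotone g) (hg0 : ∀ x, 0 ≤ g x)
    (hg_div : StrictMonoOn (fun s => g s / s) (Ioi 0))
    (hu : IsPositiveDirichletSol a b (fun t x => q t * g x) u u')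
    (hv : IsPositiveDirichletSol a b (fun t x => q t * g x) v v') {t : ℝ}
    (ht : t ∈ Ioo a ((a + b) / 2)) : u t ≤ v t := by
  have hu_eq : u a = u b := hu.eq_zero_left.trans hu.eq_zero_right.symm
  have hv_eq : v a = v b := hv.eq_zero_left.trans hv.eq_zero_right.symm
  have hab : a < b := by linarith [ht.1.trans ht.2]
  by_contra! hlt
  have left_half := (hq.isRisingPair hab.le hg hg_mono hg0 hu.isCaraSol hu_eq hv.isCaraSol hv_eq
    (hu.eq_zero_left.trans hv.eq_zero_left.symm)).forall_lt_of_lt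
      (hq.isMonotoneField hab.le hg hg_mono hg0) ht hlt
  refine hq0 (hu.weight_ae_eq_zero_of_ae_lt hv hab.le hg_div hq.nonneg ?_)
  filter_upwards [ae_restrict_mem measurableSet_Ioo,
    ae_restrict_of_ae (Measure.ae_ne volume ((a + b) / 2))] with x hx hxc
  rcases hxc.lt_or_gt with hxc | hxc
  · exact left_half x ⟨hx.1, hxc⟩
  · rw [← hq.comp_sub_left_eq hg hg_mono hg0 hu.isCaraSol hu_eq (Ioo_subset_Icc_self hx),
      ← hq.comp_sub_left_eq hg hg_mono hg0 hv.isCaraSol hv_eq (Ioo_subset_Icc_self hx)]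
    exact left_half _ ⟨by linarith [hx.2], by linarith⟩

theorem IsSymmetricWeight.eqOn_of_isPositiveDirichletSol (hq : IsSymmetricWeight a b q)
    (hq0 : ¬ ∀ᵐ t ∂volume.restrict (Icc a b), q t = 0) (hab : a < b) (hg : Continuous g)
    (hg_mono : Monotone g) (hg0 : ∀ x, 0 ≤ g x)
    (hg_div : StrictMonoOn (fun s => g s / s) (Ioi 0))
    (hu : IsPositiveDirichletSol a b (fun t x => q t * g x) u u')
    (hv : IsPositiveDirichletSol a b (fun t x => q t * g x) v v') : EqOn u v (Icc a b) := by
  have hac : a < (a + b) / 2 := by linarith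
  have interior : EqOn u v (Ioo a ((a + b) / 2)) := fun t ht =>
    le_antisymm (hq.le_of_isPositiveDirichletSol hq0 hg hg_mono hg0 hg_div hu hv ht)
      (hq.le_of_isPositiveDirichletSol hq0 hg hg_mono hg0 hg_div hv hu ht)
  have hsub : Icc a ((a + b) / 2) ⊆ Icc a b := Icc_subset_Icc_right (by linarith)
  have left_half : EqOn u v (Icc a ((a + b) / 2)) :=
    interior.of_subset_closure (hu.isCaraSol.continuousOn.mono hsub)
      (hv.isCaraSol.continuousOn.mono hsub) Ioo_subset_Icc_self (closure_Ioo hac.ne).ge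
  intro t ht
  rcases le_total t ((a + b) / 2) with htc | htc
  · exact left_half ⟨ht.1, htc⟩
  · rw [← hq.comp_sub_left_eq hg hg_mono hg0 hu.isCaraSol
        (hu.eq_zero_left.trans hu.eq_zero_right.symm) ht,
      ← hq.comp_sub_left_eq hg hg_mono hg0 hv.isCaraSol
        (hv.eq_zero_left.trans hv.eq_zero_right.symm) ht]
    exact left_half ⟨by linarith [ht.2], by linarith⟩

theorem IsPositiveDirichletSol.comp_max_zero
    (hu : IsPositiveDirichletSol a b (fun t x => q t * g x) u u') (hab : a ≤ b) :
    IsPositiveDirichletSol a b (fun t x => q t * g (max x 0)) u u' := by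
  refine ⟨hu.isCaraSol.congr_ae hab ?_, hu.eq_zero_left, hu.eq_zero_right, hu.pos⟩
  rw [← restrict_Ioo_eq_restrict_Icc]
  filter_upwards [ae_restrict_mem measurableSet_Ioo] with t ht
  rw [max_eq_left (hu.pos t ht).le]

end Uniqueness

theorem uniqueness_dirichlet_symmetric_bv_general {a b : ℝ} (hab : a < b) {g : ℝ → ℝ}
    (hg : ContinuousOn g (Ici 0)) (hg0 : ∀ s ≥ 0, 0 ≤ g s)
    (hg_div : StrictMonoOn (fun s => g s / s) (Ioi 0)) {q : ℝ → ℝ} (hq : IsSymmetricWeight a b q)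
    (hq0 : ¬ ∀ᵐ t ∂volume.restrict (Icc a b), q t = 0) {u u' v v' : ℝ → ℝ}
    (hu : IsPositiveDirichletSol a b (fun t x => q t * g x) u u')
    (hv : IsPositiveDirichletSol a b (fun t x => q t * g x) v v') : EqOn u v (Icc a b) := by
  have extension_monotone : Monotone fun x => g (max x 0) := fun x y hxy =>
    monotoneOn_of_monotoneOn_div hg hg0 hg_div.monotoneOn (le_max_right x 0) (le_max_right y 0)
      (max_le_max_right 0 hxy)
  have extension_div : StrictMonoOn (fun s => g (max s 0) / s) (Ioi 0) :=
    hg_div.congr fun s hs => by rw [max_eq_left (le_of_lt hs)]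
  exact hq.eqOn_of_isPositiveDirichletSol hq0 hab
    (hg.comp_continuous (continuous_id.max continuous_const) fun x => le_max_right x 0)
    extension_monotone (fun x => hg0 _ (le_max_right x 0)) extension_div
    (hu.comp_max_zero hab.le) (hv.comp_max_zero hab.le)

/-- **Uniqueness for the Dirichlet problem with symmetric BV weight.**
If `q ∈ BV([a,b])`, `q ≥ 0` a.e., `q ≢ 0`, `q` is symmetric about `c = (a+b)/2`
and non-decreasing on `[a,c]`, and `g` satisfies `(g₊)` and `(g_s)`, then the
Dirichlet problem `u'' + q(t) g(u) = 0`, `u(a) = 0 = u(b)`, has at most one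
positive solution. -/
theorem uniqueness_dirichlet_symmetric_bv
    (a b : ℝ) (hab : a < b)
    (g : ℝ → ℝ)
    (hg_C1 : ContDiffOn ℝ 1 g (Set.Ici 0))
    (hg0 : g 0 = 0)
    (hg_pos : ∀ s > 0, 0 < g s)
    (hg_ext : ∀ s ≤ (0 : ℝ), g s = 0)
    (hg_s : ∀ s > (0 : ℝ), g s / s < deriv g s)
    (q : ℝ → ℝ)
    (hq_bv : BoundedVariationOn q (Set.Icc a b))
    (hq_int : IntegrableOn q (Set.Icc a b))
    (hq_nonneg : ∀ᵐ t ∂(volume.restrict (Set.Icc a b)), 0 ≤ q t)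
    (hq_ne : ¬ (∀ᵐ t ∂(volume.restrict (Set.Icc a b)), q t = 0))
    (hq_symm : ∀ᵐ t ∂(volume.restrict (Set.Icc a b)), q t = q (a + b - t))
    (hq_mono : MonotoneOn q (Set.Icc a ((a + b) / 2))) :
    ∀ u u₁ v v₁ : ℝ → ℝ,
      IsCaraSol a b (fun s x => q s * g x) u u₁ → u a = 0 → u b = 0 →
        (∀ t ∈ Set.Ioo a b, 0 < u t) →
      IsCaraSol a b (fun s x => q s * g x) v v₁ → v a = 0 → v b = 0 →
        (∀ t ∈ Set.Ioo a b, 0 < v t) →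
      Set.EqOn u v (Set.Icc a b) := by
  intro u u₁ v v₁ hu hua hub hu_pos hv hva hvb hv_pos
  exact uniqueness_dirichlet_symmetric_bv_general hab hg_C1.continuousOn
    (fun s hs => hs.eq_or_lt'.elim (fun h => h ▸ hg0.ge) fun h => (hg_pos s h).le)
    (strictMonoOn_div_of_div_lt_deriv
      ((hg_C1.differentiableOn one_ne_zero).mono Ioi_subset_Ici_self) hg_s)
    ⟨hq_nonneg, hq_symm, hq_mono⟩ hq_ne ⟨hu, hua, hub, hu_pos⟩ ⟨hv, hva, hvb, hv_pos⟩
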